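/- arXiv:1806.09968 — 4 statements merged into one kernel-verified Lean document; each statement's English description precedes it below -/
import Mathlib

section
/- Let n, m be positive integers and let a_1, …, a_m ∈ ℝ^n satisfy the complement property. Then there exists a Borel measurable function g : ℝ^m → ℝ^n such that for every x ∈ ℝ^n, g applied to the measurement vector (|⟨a_1, x⟩|², …, |⟨a_m, x⟩|²) equals x or equals -x. That is, a Borel measurable inverse of the phaseless measurement map exists up to a global sign. -/
/-!
A vanishing difference `|φ j x| ^ 2 - |φ j y| ^ 2 = φ j (x - y) * φ j (x + y)` means that each
`φ j` kills `x - y` or `x + y`. Applied to the set of `j` of the first kind, the complement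
property makes one of these two vectors zero, so the fibres of the phaseless map are the orbits
`{x, -x}`.

A Borel embedding `b` into `ℝ` selects one point of each orbit, namely the one with `b (-x) ≤ b x`.
By the Lusin–Souslin theorem, the phaseless map has a measurable left inverse on the Borel set of
the selected points.
-/

open MeasurableSpace Module

section MeasurableSelection

variable {X Y : Type*} [MeasurableSpace X] [StandardBorelSpace X]
  [MeasurableSpace Y] [CountablySeparated Y]

theorem exists_measurable_leftInvOn [Nonempty X] {f : X → Y} {s : Set X}
    (hf : Measurable f) (hs : MeasurableSet s) (hinj : s.InjOn f) :
    ∃ g : Y → X, Measurable g ∧ s.LeftInvOn g f := by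
  have : StandardBorelSpace s := hs.standardBorel
  have hemb : MeasurableEmbedding fun x : s ↦ f x :=
    (hf.comp measurable_subtype_coe).measurableEmbedding hinj.injective
  obtain ⟨g, hg, hgf⟩ := hemb.exists_measurable_extend measurable_subtype_coe fun _ ↦ inferInstance
  exact ⟨g, hg, fun x hx ↦ congrFun hgf ⟨x, hx⟩⟩

theorem exists_measurableSet_transversal_of_involutive {σ : X → X}
    (hσ : Measurable σ) (hinv : σ.Involutive) :
    ∃ s, MeasurableSet s ∧ (∀ x, x ∈ s ∨ σ x ∈ s) ∧ ∀ x ∈ s, σ x ∈ s → σ x = x := by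
  obtain ⟨b, hb⟩ := MeasureTheory.exists_measurableEmbedding_real X
  refine ⟨{x | b (σ x) ≤ b x}, measurableSet_le (hb.measurable.comp hσ) hb.measurable,
    fun x ↦ ?_, fun x hx hσx ↦ hb.injective (le_antisymm hx ?_)⟩
  · simpa only [Set.mem_ofPred_eq, hinv x] using le_total (b (σ x)) (b x)
  · simpa only [Set.mem_ofPred_eq, hinv x] using hσx

theorem exists_measurable_inverse_up_to_involution [Nonempty X] {σ : X → X} {f : X → Y}
    (hσ : Measurable σ) (hinv : σ.Involutive) (hf : Measurable f)
    (hfσ : ∀ x y, f x = f y ↔ x = y ∨ x = σ y) :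
    ∃ g : Y → X, Measurable g ∧ ∀ x, g (f x) = x ∨ g (f x) = σ x := by
  obtain ⟨s, hs, hcover, hfixed⟩ := exists_measurableSet_transversal_of_involutive hσ hinv
  have hinj : s.InjOn f := by
    intro x hx y hy hxy
    rcases (hfσ x y).mp hxy with rfl | rfl
    · rfl
    · exact hfixed y hy hx
  obtain ⟨g, hg, hgf⟩ := exists_measurable_leftInvOn hf hs hinj
  refine ⟨g, hg, fun x ↦ (hcover x).imp (fun hx ↦ hgf hx) fun hx ↦ ?_⟩
  rw [(hfσ x (σ x)).mpr (.inr (hinv x).symm), hgf hx]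

end MeasurableSelection

section ComplementProperty

/-- The complement property of a family of linear functionals: of any two complementary
subfamilies, at least one separates points. Separation is expressed by a trivial common kernel; on
a finite-dimensional vector space this says that the subfamily spans the dual. -/
def ComplementProperty {R M ι : Type*} [CommSemiring R] [AddCommMonoid M] [Module R M]
    (φ : ι → Dual R M) : Prop :=
  ∀ S : Set ι, (Submodule.span R (φ '' S)).dualCoannihilator = ⊥ ∨
    (Submodule.span R (φ '' Sᶜ)).dualCoannihilator = ⊥

theorem complementProperty_of_span_eq_top {R M N ι : Type*} [CommRing R]
    [AddCommGroup M] [Module R M] [Projective R M] [AddCommGroup N] [Module R N]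
    (e : N ≃ₗ[R] Dual R M) {a : ι → N}
    (ha : ∀ S : Set ι, Submodule.span R (a '' S) = ⊤ ∨ Submodule.span R (a '' Sᶜ) = ⊤) :
    ComplementProperty fun j ↦ e (a j) := by
  have separates (S : Set ι) (hS : Submodule.span R (a '' S) = ⊤) :
      (Submodule.span R ((fun j ↦ e (a j)) '' S)).dualCoannihilator = ⊥ := by
    rw [← Set.image_image e a S, ← LinearEquiv.coe_coe, ← Submodule.map_span, hS,
      Submodule.map_top, LinearEquiv.range, Submodule.dualCoannihilator_top]
  exact fun S ↦ (ha S).imp (separates S) (separates Sᶜ)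

theorem eq_zero_of_dualCoannihilator_span_image_eq_bot {R M ι : Type*} [CommSemiring R]
    [AddCommMonoid M] [Module R M] {φ : ι → Dual R M} {S : Set ι}
    (hS : (Submodule.span R (φ '' S)).dualCoannihilator = ⊥) {z : M}
    (hz : ∀ j ∈ S, φ j z = 0) : z = 0 := by
  rw [← Submodule.mem_bot R, ← hS, ← SetLike.mem_coe, Submodule.coe_dualCoannihilator_span]
  exact Set.forall_mem_image.mpr hz

end ComplementProperty

section PhaselessMap

/-- The phaseless measurement map of a family of linear functionals. The measurement vectors `a j`
of the classical setting enter as the functionals `⟨a j, ·⟩`. -/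
def phaselessMap {R M ι : Type*} [CommRing R] [LinearOrder R] [AddCommGroup M] [Module R M]
    (φ : ι → Dual R M) (x : M) : ι → R :=
  fun j ↦ |φ j x| ^ 2

theorem measurable_phaselessMap {V ι : Type*} [AddCommGroup V] [Module ℝ V] [MeasurableSpace V]
    {φ : ι → Dual ℝ V} (hφ : ∀ j, Measurable (φ j)) : Measurable (phaselessMap φ) :=
  measurable_pi_lambda _ fun j ↦ (hφ j).abs.pow_const 2

theorem ComplementProperty.phaselessMap_eq_iff {R M ι : Type*} [CommRing R] [LinearOrder R]
    [IsStrictOrderedRing R] [AddCommGroup M] [Module R M] {φ : ι → Dual R M}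
    (hφ : ComplementProperty φ) (x y : M) :
    phaselessMap φ x = phaselessMap φ y ↔ x = y ∨ x = -y := by
  constructor
  · intro hxy
    have hker (j : ι) : φ j (x - y) = 0 ∨ φ j (x + y) = 0 := by
      have hsq : φ j x ^ 2 = φ j y ^ 2 := by
        simpa only [phaselessMap, sq_abs] using congrFun hxy j
      rw [map_sub, map_add, sub_eq_zero, add_eq_zero_iff_eq_neg]
      exact sq_eq_sq_iff_eq_or_eq_neg.mp hsq
    refine (hφ {j | φ j (x - y) = 0}).imp (fun hS ↦ ?_) fun hS ↦ ?_
    · exact sub_eq_zero.mp (eq_zero_of_dualCoannihilator_span_image_eq_bot hS fun _ hj ↦ hj)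
    · exact add_eq_zero_iff_eq_neg.mp <|
        eq_zero_of_dualCoannihilator_span_image_eq_bot hS fun j hj ↦ (hker j).resolve_left hj
  · rintro (rfl | rfl)
    · rfl
    · exact funext fun j ↦ by simp only [phaselessMap, map_neg, abs_neg]

end PhaselessMap

theorem complement_property_measurable_inverse_up_to_sign_general {V ι : Type*} [Countable ι]
    [AddCommGroup V] [Module ℝ V] [MeasurableSpace V] [StandardBorelSpace V] [MeasurableNeg V]
    {φ : ι → Dual ℝ V} (hφ : ∀ j, Measurable (φ j)) (hcp : ComplementProperty φ) :
    ∃ g : (ι → ℝ) → V, Measurable g ∧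
      ∀ x, g (phaselessMap φ x) = x ∨ g (phaselessMap φ x) = -x :=
  exists_measurable_inverse_up_to_involution measurable_neg neg_involutive
    (measurable_phaselessMap hφ) hcp.phaselessMap_eq_iff

/-- If `a_1, …, a_m ∈ ℝ^n` satisfy the complement property
(for every `S ⊆ {1, …, m}`, either `{a_j : j ∈ S}` or `{a_j : j ∉ S}` spans `ℝ^n`),
then there is a Borel measurable `g : ℝ^m → ℝ^n` with
`g (|⟨a_1, x⟩|², …, |⟨a_m, x⟩|²) = x` or `= -x` for every `x`. -/
theorem complement_property_measurable_inverse_up_to_sign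
    (n m : ℕ) (hn : 0 < n) (hm : 0 < m) (a : Fin m → Fin n → ℝ)
    (hcp : ∀ S : Set (Fin m),
      Submodule.span ℝ (a '' S) = ⊤ ∨ Submodule.span ℝ (a '' Sᶜ) = ⊤) :
    ∃ g : (Fin m → ℝ) → (Fin n → ℝ), Measurable g ∧
      ∀ x : Fin n → ℝ,
        g (fun j => |∑ i, a j i * x i| ^ 2) = x ∨
        g (fun j => |∑ i, a j i * x i| ^ 2) = -x :=
  complement_property_measurable_inverse_up_to_sign_general
    (fun j ↦ (dotProductEquiv ℝ (Fin n) (a j)).continuous_of_finiteDimensional.measurable)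
    (complementProperty_of_span_eq_top (dotProductEquiv ℝ (Fin n)) hcp)
end

section
/- Let n, m be positive integers and let a_1, …, a_m ∈ ℝ^n have the complement property. Then the phaseless measurement map f : ℝ^n → ℝ^m, f(x)_j = |⟨a_j, x⟩|², is injective up to a global sign: for all x, y ∈ ℝ^n, if |⟨a_j, x⟩|² = |⟨a_j, y⟩|² for all j = 1, …, m, then y = x or y = -x. -/
/-!
Equality of squares in a ring without zero divisors means equality up to sign, so the indices split
into the set `S` where `x` and `y` have the same measurement and its complement, where the
measurements are opposite. If the vectors indexed by `S` span, then `y = x`; if those indexed by the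
complement span, then `y = -x`.
-/

section ComplementProperty

variable {R M N P ι : Type*} [CommRing R] [AddCommMonoid M] [Module R M]
  [AddCommGroup N] [Module R N]

variable (R) in
/-- The complement property of a family of vectors: however the indices are split into two parts,
one of the parts spans. Both parts are images of index sets, so that repeated vectors may be
separated. -/
def HasComplementProperty (a : ι → M) : Prop :=
  ∀ S : Set ι, Submodule.span R (a '' S) = ⊤ ∨ Submodule.span R (a '' Sᶜ) = ⊤

theorem eq_of_forall_mem_eq_of_span_eq_top [AddCommGroup P] [Module R P]
    {B : M →ₗ[R] N →ₗ[R] P} (hB : B.SeparatingRight) {s : Set M} (hs : Submodule.span R s = ⊤)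
    {x y : N} (hxy : ∀ v ∈ s, B v x = B v y) : x = y :=
  LinearMap.ker_eq_bot.mp (LinearMap.separatingRight_iff_flip_ker_eq_bot.mp hB)
    (LinearMap.ext_on hs hxy)

theorem complement_property_injective_up_to_sign_general [NoZeroDivisors R]
    {B : M →ₗ[R] N →ₗ[R] R} (hB : B.SeparatingRight) {a : ι → M}
    (ha : HasComplementProperty R a) {x y : N} (hxy : ∀ j, B (a j) x ^ 2 = B (a j) y ^ 2) :
    y = x ∨ y = -x := by
  have eq_or_eq_neg (j : ι) : B (a j) y = B (a j) x ∨ B (a j) y = -B (a j) x :=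
    sq_eq_sq_iff_eq_or_eq_neg.mp (hxy j).symm
  refine (ha {j | B (a j) y = B (a j) x}).imp (fun hspan ↦ ?_) (fun hspan ↦ ?_)
  · exact eq_of_forall_mem_eq_of_span_eq_top hB hspan (Set.forall_mem_image.mpr fun _ hj ↦ hj)
  · refine eq_of_forall_mem_eq_of_span_eq_top hB hspan (Set.forall_mem_image.mpr ?_)
    intro j hj
    simpa only [map_neg] using (eq_or_eq_neg j).resolve_left hj

end ComplementProperty

theorem separatingRight_dotProductBilin (R n : Type*) [CommSemiring R] [Fintype n] :
    (dotProductBilin R R : (n → R) →ₗ[R] (n → R) →ₗ[R] R).SeparatingRight :=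
  fun y hy ↦ dotProduct_eq_zero y fun x ↦ (dotProduct_comm y x).trans (hy x)

/-- If `a_1, …, a_m ∈ ℝ^n` have the complement property, then the
phaseless measurement map `f(x)_j = |⟨a_j, x⟩|²` is injective up to a global
sign. -/
theorem complement_property_injective_up_to_sign
    (n m : ℕ) (hn : 0 < n) (hm : 0 < m) (a : Fin m → Fin n → ℝ)
    (hcp : ∀ S : Set (Fin m),
      Submodule.span ℝ (a '' S) = ⊤ ∨ Submodule.span ℝ (a '' Sᶜ) = ⊤) :
    ∀ x y : Fin n → ℝ,
      (∀ j, |∑ i, a j i * x i| ^ 2 = |∑ i, a j i * y i| ^ 2) →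
      y = x ∨ y = -x := by
  intro x y hxy
  exact complement_property_injective_up_to_sign_general (separatingRight_dotProductBilin ℝ (Fin n))
    hcp fun j ↦ by simpa only [dotProductBilin_apply_apply, dotProduct, sq_abs] using hxy j
end

section
/- Let n, m be positive integers and let a_1, …, a_m ∈ ℝ^n. Suppose the phaseless measurement map f : ℝ^n → ℝ^m, f(x)_j = |⟨a_j, x⟩|², is injective up to a global sign, i.e., whenever |⟨a_j, x⟩|² = |⟨a_j, y⟩|² for all j, one has y = x or y = -x. Then the family a_1, …, a_m has the complement property: for every subset S ⊆ {1, …, m}, either {a_j : j ∈ S} spans ℝ^n or {a_j : j ∉ S} spans ℝ^n. -/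
/-!
If neither `{a_j : j ∈ S}` nor `{a_j : j ∉ S}` spans, choose nonzero functionals `f` and `g`
vanishing on the first and on the second family. At each `a_j` one of them vanishes, so `f + g` and
`f - g` agree there up to sign; being equal up to a global sign would force `f = 0` or `g = 0`.
-/

theorem eq_zero_or_eq_zero_of_sq_injective_up_to_neg
    {ι F M R : Type*} [AddCommGroup M] [CommRing R] [FunLike F M R] [AddMonoidHomClass F M R]
    (two_regular : IsSMulRegular M (2 : ℕ)) (φ : ι → F)
    (hinj : ∀ x y : M, (∀ j, φ j x ^ 2 = φ j y ^ 2) → y = x ∨ y = -x)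
    {u v : M} (huv : ∀ j, φ j u * φ j v = 0) : u = 0 ∨ v = 0 := by
  have sq_eq (j : ι) : φ j (u + v) ^ 2 = φ j (u - v) ^ 2 := by
    rw [map_add, map_sub]
    linear_combination 4 * huv j
  rcases hinj (u + v) (u - v) sq_eq with h | h
  · have two_nsmul_v : 2 • v = 0 := calc
      2 • v = (u + v) - (u - v) := by abel
      _ = 0 := by rw [h, sub_self]
    exact .inr (two_regular.right_eq_zero_of_smul two_nsmul_v)
  · have two_nsmul_u : 2 • u = 0 := calc
      2 • u = (u + v) + (u - v) := by abel
      _ = 0 := by rw [h, add_neg_cancel]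
    exact .inl (two_regular.right_eq_zero_of_smul two_nsmul_u)

theorem injective_up_to_sign_complement_property_general
    {ι K V : Type*} [Field K] [NeZero (2 : K)] [AddCommGroup V] [Module K V] (a : ι → V)
    (hinj : ∀ f g : Module.Dual K V, (∀ j, f (a j) ^ 2 = g (a j) ^ 2) → g = f ∨ g = -f)
    (S : Set ι) :
    Submodule.span K (a '' S) = ⊤ ∨ Submodule.span K (a '' Sᶜ) = ⊤ := by
  by_contra! ⟨hS, hSc⟩
  obtain ⟨f, hf, hfS⟩ := Submodule.exists_le_ker_of_lt_top _ hS.lt_top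
  obtain ⟨g, hg, hgSc⟩ := Submodule.exists_le_ker_of_lt_top _ hSc.lt_top
  have apply_mul_apply_eq_zero (j : ι) : f (a j) * g (a j) = 0 := by
    by_cases hj : j ∈ S
    · have hfj : f (a j) = 0 := hfS (Submodule.subset_span (Set.mem_image_of_mem a hj))
      rw [hfj, zero_mul]
    · have hgj : g (a j) = 0 := hgSc (Submodule.subset_span (Set.mem_image_of_mem a hj))
      rw [hgj, mul_zero]
  have two_regular : IsSMulRegular (Module.Dual K V) (2 : ℕ) :=
    .of_map (Nat.cast : ℕ → K) (Nat.cast_smul_eq_nsmul K 2)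
      ((IsUnit.mk0 (2 : K) two_ne_zero).isSMulRegular _)
  exact (eq_zero_or_eq_zero_of_sq_injective_up_to_neg two_regular
    (fun j => Module.Dual.eval K V (a j)) hinj apply_mul_apply_eq_zero).elim hf hg

/-- If the phaseless measurement map `f(x)_j = |⟨a_j, x⟩|²` is
injective up to a global sign, then `a_1, …, a_m ∈ ℝ^n` have the complement
property. -/
theorem injective_up_to_sign_complement_property
    (n m : ℕ) (hn : 0 < n) (hm : 0 < m) (a : Fin m → Fin n → ℝ)
    (hinj : ∀ x y : Fin n → ℝ,
      (∀ j, |∑ i, a j i * x i| ^ 2 = |∑ i, a j i * y i| ^ 2) →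
      y = x ∨ y = -x) :
    ∀ S : Set (Fin m),
      Submodule.span ℝ (a '' S) = ⊤ ∨ Submodule.span ℝ (a '' Sᶜ) = ⊤ :=
  injective_up_to_sign_complement_property_general a <|
    (dotProductEquiv ℝ (Fin n)).surjective.forall₂.2 <| by
      simpa only [sq_abs, dotProductEquiv_apply_apply, dotProduct, mul_comm, ← map_neg,
        EmbeddingLike.apply_eq_iff_eq] using hinj
end

section
/- Let n ≥ 1 and m be positive integers with m ≤ 2n - 2, and let a_1, …, a_m ∈ ℝ^n be arbitrary. Then the phaseless measurement map f : ℝ^n → ℝ^m, f(x)_j = |⟨a_j, x⟩|², is NOT injective up to a global sign: there exist x, y ∈ ℝ^n with y ≠ x and y ≠ -x such that |⟨a_j, x⟩|² = |⟨a_j, y⟩|² for all j = 1, …, m. -/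
/-!
At most `2 * (n - 1)` vectors in `ℝ^n` split into two families of at most `n - 1` vectors each.
Neither family spans, so some `u ≠ 0` is orthogonal to the first and some `v ≠ 0` to the second.
Every given vector is then orthogonal to `u` or to `v`, so its products with `u + v` and
`u - v` agree up to sign, although `u - v ≠ ±(u + v)`.
-/

open Finset

theorem exists_card_le_card_compl_le {ι : Type*} [Fintype ι] [DecidableEq ι] {k l : ℕ}
    (h : Fintype.card ι ≤ k + l) : ∃ s : Finset ι, #s ≤ k ∧ #sᶜ ≤ l := by
  obtain ⟨s, -, hs⟩ := exists_subset_card_eq (s := (univ : Finset ι)) (min_le_right k _)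
  rw [card_univ] at hs
  refine ⟨s, by omega, ?_⟩
  rw [card_compl]
  omega

theorem exists_ne_zero_forall_mem_eq_zero_of_card_lt_rank {ι R V : Type*} [Ring R]
    [StrongRankCondition R] [AddCommGroup V] [Module R V] (φ : ι → V →ₗ[R] R) {s : Finset ι}
    (hs : (#s : Cardinal) < Module.rank R V) : ∃ u ≠ 0, ∀ j ∈ s, φ j u = 0 := by
  let Φ : V →ₗ[R] s → R := LinearMap.pi fun j ↦ φ j
  have hΦ : ¬ Function.Injective Φ := fun hinj ↦ by
    have hrank : Module.rank R V ≤ #s := by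
      simpa [rank_fun'] using Φ.lift_rank_le_of_injective hinj
    exact hs.not_ge hrank
  obtain ⟨u, hu, hu0⟩ : ∃ u, Φ u = 0 ∧ u ≠ 0 := by
    simpa [injective_iff_map_eq_zero] using hΦ
  exact ⟨u, hu0, fun j hj ↦ congrFun hu ⟨j, hj⟩⟩

section AddMonoidHomClass

variable {F V R : Type*} [AddCommGroup V] [Ring R] [FunLike F V R] [AddMonoidHomClass F V R]

theorem map_add_sq_eq_map_sub_sq (f : F) {u v : V} (h : f u = 0 ∨ f v = 0) :
    f (u + v) ^ 2 = f (u - v) ^ 2 := by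
  rcases h with hu | hv
  · simp [hu]
  · simp [hv]

theorem exists_ne_ne_neg_forall_sq_eq {ι : Sort*} (hV : IsSMulRegular V (2 : ℕ)) (φ : ι → F)
    {u v : V} (hu : u ≠ 0) (hv : v ≠ 0) (huv : ∀ j, φ j u = 0 ∨ φ j v = 0) :
    ∃ x y : V, y ≠ x ∧ y ≠ -x ∧ ∀ j, φ j x ^ 2 = φ j y ^ 2 := by
  refine ⟨u + v, u - v, fun h ↦ hv ?_, fun h ↦ hu ?_, fun j ↦ map_add_sq_eq_map_sub_sq _ (huv j)⟩
  · apply hV.right_eq_zero_of_smul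
    calc 2 • v = (u + v) - (u - v) := by abel
      _ = 0 := sub_eq_zero.mpr h.symm
  · apply hV.right_eq_zero_of_smul
    calc 2 • u = (u - v) + (u + v) := by abel
      _ = 0 := eq_neg_iff_add_eq_zero.mp h

end AddMonoidHomClass

theorem not_injective_up_to_sign_of_few_measurements_general {ι R V : Type*} [Fintype ι] [Ring R]
    [StrongRankCondition R] [AddCommGroup V] [Module R V] (hV : IsSMulRegular V (2 : ℕ))
    (φ : ι → V →ₗ[R] R) {d : ℕ} (hι : Fintype.card ι ≤ 2 * d)
    (hd : (d : Cardinal) < Module.rank R V) :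
    ∃ x y : V, y ≠ x ∧ y ≠ -x ∧ ∀ j, φ j x ^ 2 = φ j y ^ 2 := by
  classical
  obtain ⟨s, hs, hsc⟩ := exists_card_le_card_compl_le (hι.trans_eq (two_mul d))
  obtain ⟨u, hu0, hu⟩ := exists_ne_zero_forall_mem_eq_zero_of_card_lt_rank φ
    ((Nat.cast_le.mpr hs).trans_lt hd)
  obtain ⟨v, hv0, hv⟩ := exists_ne_zero_forall_mem_eq_zero_of_card_lt_rank φ
    ((Nat.cast_le.mpr hsc).trans_lt hd)
  refine exists_ne_ne_neg_forall_sq_eq hV φ hu0 hv0 fun j ↦ ?_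
  exact (em (j ∈ s)).imp (hu j) fun hj ↦ hv j (mem_compl.mpr hj)

/-- If `m ≤ 2n - 2`, then for any `a_1, …, a_m ∈ ℝ^n` the phaseless
measurement map `f(x)_j = |⟨a_j, x⟩|²` is not injective up to a global sign:
there exist `x, y` with `y ≠ x`, `y ≠ -x`, and equal measurements. -/
theorem not_injective_up_to_sign_of_few_measurements
    (n m : ℕ) (hn : 1 ≤ n) (hm : 0 < m) (hmn : m ≤ 2 * n - 2)
    (a : Fin m → Fin n → ℝ) :
    ∃ x y : Fin n → ℝ, y ≠ x ∧ y ≠ -x ∧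
      ∀ j, |∑ i, a j i * x i| ^ 2 = |∑ i, a j i * y i| ^ 2 := by
  simpa [dotProduct] using not_injective_up_to_sign_of_few_measurements_general
    (nsmul_right_injective two_ne_zero) (fun j ↦ dotProductBilin ℝ ℝ (a j)) (d := n - 1)
    (by rw [Fintype.card_fin]; omega) (by rw [rank_fin_fun]; exact_mod_cast Nat.sub_one_lt_of_lt hn)
end
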